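/- Let A be a ring. Let (U_i, V_i)_{i ∈ I} and (U'_j, V'_j)_{j ∈ J} be two families of pairs of matrices over A, where each U has size m × n and the corresponding V has size p × m (sizes depending on the index). Suppose that the class of right A-modules defined by (U_i, V_i)_{i ∈ I} is contained in the class of right A-modules defined by (U'_j, V'_j)_{j ∈ J}, i.e. every right A-module M satisfying [for all i ∈ I and all x ∈ M^{m_i}, x U_i = 0 implies x = y V_i for some y ∈ M^{p_i}] also satisfies the corresponding condition for all (U'_j, V'_j). Then the class of left A-modules defined by the swapped family (V_i, U_i)_{i ∈ I} is contained in the class of left A-modules defined by (V'_j, U'_j)_{j ∈ J}: every left A-module N satisfying [for all i ∈ I and all x ∈ N^{m_i}, V_i x = 0 implies x = U_i y for some y ∈ N^{n_i}] also satisfies the corresponding condition for all (V'_j, U'_j). -/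

import Mathlib

open MulOpposite

universe u

/-- `xU` for a row vector `x` over a right `A`-module `M` and matrix `U` over `A`:
`(xU)_j = ∑ i, x i · U i j` using the right scalar action. -/
def vecMulMat {A : Type u} [Ring A] {M : Type*} [AddCommGroup M] [Module Aᵐᵒᵖ M]
    {m n : ℕ} (x : Fin m → M) (U : Matrix (Fin m) (Fin n) A) : Fin n → M :=
  fun j => ∑ i, op (U i j) • x i

/-- `Vx` for a column vector `x` over a left `A`-module `N` and matrix `V` over `A`:
`(Vx)_k = ∑ i, V k i • x i` using the left scalar action. -/
def matVecMul {A : Type u} [Ring A] {N : Type*} [AddCommGroup N] [Module A N]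
    {p m : ℕ} (V : Matrix (Fin p) (Fin m) A) (x : Fin m → N) : Fin p → N :=
  fun k => ∑ i, V k i • x i

/-- The character module `Hom_ℤ(N, ℚ ⧸ ℤ)` of a left `A`-module `N` is a right `A`-module. -/
instance CharacterModule.moduleMulOpposite {A N : Type*} [Ring A] [AddCommGroup N] [Module A N] :
    Module Aᵐᵒᵖ (CharacterModule N) where
  smul a f := AddMonoidHom.comp f (DistribSMul.toAddMonoidHom N a.unop)
  one_smul f := CharacterModule.ext _ fun x => congrArg f (one_smul A x)
  mul_smul a b f := CharacterModule.ext _ fun x => congrArg f (mul_smul b.unop a.unop x)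
  smul_zero _ := rfl
  smul_add _ _ _ := rfl
  add_smul a b f := CharacterModule.ext _ fun x =>
    (congrArg f (add_smul a.unop b.unop x)).trans (map_add f _ _)
  zero_smul f := CharacterModule.ext _ fun x =>
    (congrArg f (zero_smul A x)).trans (map_zero f)

theorem CharacterModule.op_smul_apply {A N : Type*} [Ring A] [AddCommGroup N] [Module A N]
    (a : A) (f : CharacterModule N) (x : N) : (op a • f) x = f (a • x) := rfl

theorem CharacterModule.sum_apply {ι N : Type*} [AddCommGroup N] (s : Finset ι)
    (f : ι → CharacterModule N) (x : N) : (∑ i ∈ s, f i) x = ∑ i ∈ s, f i x :=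
  AddMonoidHom.finsetSum_apply f s x

/-- Every character of `N ^ m` is the pairing with a tuple of characters of `N`. -/
theorem CharacterModule.exists_apply_eq_sum {ι N : Type*} [Fintype ι] [DecidableEq ι]
    [AddCommGroup N] (F : CharacterModule (ι → N)) :
    ∃ f : ι → CharacterModule N, ∀ x, F x = ∑ i, f i (x i) := by
  refine ⟨fun i => AddMonoidHom.comp F (AddMonoidHom.single (fun _ => N) i), fun x => ?_⟩
  conv_lhs => rw [← Finset.univ_sum_single x, map_sum]
  rfl

/-- A character vanishing on the kernel of `φ` factors through `φ`. -/
theorem CharacterModule.exists_factor_of_ker_le {B C : Type*} [AddCommGroup B] [AddCommGroup C]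
    (φ : B →ₗ[ℤ] C) (F : CharacterModule B) (hF : ∀ x, φ x = 0 → F x = 0) :
    ∃ G : CharacterModule C, ∀ x, F x = G (φ x) := by
  let L : B →ₗ[ℤ] AddCircle (1 : ℚ) := AddMonoidHom.toIntLinearMap F
  have hL : LinearMap.ker φ ≤ LinearMap.ker L := fun x hx => hF x hx
  have hinj : Function.Injective ((LinearMap.ker φ).liftQ φ le_rfl) :=
    LinearMap.ker_eq_bot.mp (Submodule.ker_liftQ_eq_bot' _ φ rfl)
  obtain ⟨G, hG⟩ := CharacterModule.dual_surjective_of_injective _ hinj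
    ((LinearMap.ker φ).liftQ L hL).toAddMonoidHom
  exact ⟨G, fun x => (DFunLike.congr_fun hG (Submodule.Quotient.mk x)).symm⟩

/-- A point outside a subgroup is separated from it by a character. -/
theorem CharacterModule.exists_apply_ne_zero_of_notMem {B : Type*} [AddCommGroup B]
    (S : Submodule ℤ B) {x : B} (hx : x ∉ S) :
    ∃ F : CharacterModule B, (∀ y ∈ S, F y = 0) ∧ F x ≠ 0 := by
  obtain ⟨c, hc⟩ := CharacterModule.exists_character_apply_ne_zero_of_ne_zero
    (a := S.mkQ x) (by simpa using hx)
  refine ⟨CharacterModule.dual S.mkQ c, fun y hy => ?_, hc⟩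
  have hy' : S.mkQ y = 0 := by simpa using hy
  exact (congrArg c hy').trans (map_zero c)

/-- `matVecMul V` as an additive (i.e. `ℤ`-linear) map. -/
def matVecMulHom {A : Type u} [Ring A] {N : Type*} [AddCommGroup N] [Module A N]
    {p m : ℕ} (V : Matrix (Fin p) (Fin m) A) : (Fin m → N) →ₗ[ℤ] (Fin p → N) :=
  AddMonoidHom.toIntLinearMap
    { toFun := matVecMul V
      map_zero' := by ext k; simp [matVecMul]
      map_add' := fun x y => by ext k; simp [matVecMul, Finset.sum_add_distrib] }

theorem sum_vecMulMat_apply {A : Type u} [Ring A] {N : Type*} [AddCommGroup N] [Module A N]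
    {m n : ℕ} (U : Matrix (Fin m) (Fin n) A) (f : Fin m → CharacterModule N) (y : Fin n → N) :
    ∑ j, vecMulMat f U j (y j) = ∑ i, f i (matVecMul U y i) := by
  simp only [vecMulMat, matVecMul, CharacterModule.sum_apply, CharacterModule.op_smul_apply,
    map_sum]
  exact Finset.sum_comm

theorem eq_of_sum_apply_eq {ι N : Type*} [Fintype ι] [AddCommGroup N]
    {f g : ι → CharacterModule N} (h : ∀ x : ι → N, ∑ i, f i (x i) = ∑ i, g i (x i)) : f = g := by
  classical
  funext i
  ext x
  have key : ∀ k : ι → CharacterModule N, ∑ j, k j (Pi.single (M := fun _ => N) i x j) = k i x := by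
    intro k
    rw [Finset.sum_eq_single i]
    · simp
    · intro j _ hj
      simp [Pi.single_eq_of_ne hj]
    · simp
  rw [← key f, ← key g, h]

/-- A left module satisfies the condition of `(V, U)` if and only if its character module
satisfies the condition of `(U, V)`. -/
theorem forall_matVecMul_iff_forall_vecMulMat_characterModule {A : Type u} [Ring A]
    {N : Type*} [AddCommGroup N] [Module A N] {m n p : ℕ}
    (U : Matrix (Fin m) (Fin n) A) (V : Matrix (Fin p) (Fin m) A) :
    (∀ x : Fin m → N, matVecMul V x = 0 → ∃ y : Fin n → N, x = matVecMul U y) ↔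
      ∀ f : Fin m → CharacterModule N, vecMulMat f U = 0 →
        ∃ g : Fin p → CharacterModule N, f = vecMulMat g V := by
  constructor
  · intro h f hf
    let F : CharacterModule (Fin m → N) :=
      ∑ i, AddMonoidHom.comp (f i) (Pi.evalAddMonoidHom (fun _ => N) i)
    have hF : ∀ x, F x = ∑ i, f i (x i) := fun x => CharacterModule.sum_apply _ _ x
    obtain ⟨G, hG⟩ := CharacterModule.exists_factor_of_ker_le (matVecMulHom V) F fun x hx => by
      obtain ⟨y, rfl⟩ := h x hx
      rw [hF, ← sum_vecMulMat_apply, hf]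
      exact Finset.sum_eq_zero fun _ _ => rfl
    obtain ⟨g, hg⟩ := CharacterModule.exists_apply_eq_sum G
    refine ⟨g, eq_of_sum_apply_eq fun x => ?_⟩
    rw [sum_vecMulMat_apply, ← hF, hG, hg]
    rfl
  · intro h x hx
    by_contra hxU
    obtain ⟨F, hF, hFx⟩ := CharacterModule.exists_apply_ne_zero_of_notMem
      (LinearMap.range (matVecMulHom (N := N) U)) (x := x)
      fun ⟨y, hy⟩ => hxU ⟨y, hy.symm⟩
    obtain ⟨f, hf⟩ := CharacterModule.exists_apply_eq_sum F
    obtain ⟨g, rfl⟩ := h f <| eq_of_sum_apply_eq fun y => by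
      rw [sum_vecMulMat_apply, ← hf]
      exact (hF _ ⟨y, rfl⟩).trans (Finset.sum_eq_zero fun _ _ => rfl).symm
    apply hFx
    rw [hf, sum_vecMulMat_apply, hx]
    simp

/-- if the class of right `A`-modules defined by `(U_i, V_i)_{i ∈ I}` is
contained in the class defined by `(U'_j, V'_j)_{j ∈ J}`, then the class of left
`A`-modules defined by the swapped family `(V_i, U_i)_{i ∈ I}` is contained in the class
of left `A`-modules defined by `(V'_j, U'_j)_{j ∈ J}`. -/
theorem stmt10 (A : Type u) [Ring A]
    {I : Type*} {m n p : I → ℕ}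
    (U : ∀ i, Matrix (Fin (m i)) (Fin (n i)) A)
    (V : ∀ i, Matrix (Fin (p i)) (Fin (m i)) A)
    {J : Type*} {m' n' p' : J → ℕ}
    (U' : ∀ j, Matrix (Fin (m' j)) (Fin (n' j)) A)
    (V' : ∀ j, Matrix (Fin (p' j)) (Fin (m' j)) A)
    (h : ∀ (M : Type u) [AddCommGroup M] [Module Aᵐᵒᵖ M],
      (∀ i (x : Fin (m i) → M), vecMulMat x (U i) = 0 →
          ∃ y : Fin (p i) → M, x = vecMulMat y (V i)) →
      (∀ j (x : Fin (m' j) → M), vecMulMat x (U' j) = 0 →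
          ∃ y : Fin (p' j) → M, x = vecMulMat y (V' j))) :
    ∀ (N : Type u) [AddCommGroup N] [Module A N],
      (∀ i (x : Fin (m i) → N), matVecMul (V i) x = 0 →
          ∃ y : Fin (n i) → N, x = matVecMul (U i) y) →
      (∀ j (x : Fin (m' j) → N), matVecMul (V' j) x = 0 →
          ∃ y : Fin (n' j) → N, x = matVecMul (U' j) y) := by
  intro N _ _ hN j
  rw [forall_matVecMul_iff_forall_vecMulMat_characterModule]
  exact h (CharacterModule N)
    (fun i => (forall_matVecMul_iff_forall_vecMulMat_characterModule (U i) (V i)).mp (hN i)) j
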